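/- Suppose X'X/n → Q with Q symmetric positive definite, and let A_n be nonstochastic p_n × k matrices such that the largest eigenvalues λ_max(A_n'A_n) are bounded. Then lim_{M→∞} sup_{n≥k} sup_{β∈ℝ^k} P_{n,β,σ}(√n‖A_nβ̃ − A_nβ‖ ≥ M) = 0, and for every ε > 0 and any sequence c_n ≥ 0 with c_n = o(n^{1/2}), lim_{n→∞} sup_{β∈ℝ^k} P_{n,β,σ}(c_n‖A_nβ̃ − A_nβ‖ ≥ ε) = 0. -/

import Mathlib

open MeasureTheory Matrix Real Filter Topology ENNReal NNReal

noncomputable section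

/-- Euclidean norm of a finite tuple. -/
def enorm2 {ι : Type*} [Fintype ι] (v : ι → ℝ) : ℝ := Real.sqrt (∑ i, v i ^ 2)

/-- The `N(0, σ² I)` distribution on `ι → ℝ`, given by its Lebesgue density. -/
def gaussPi (ι : Type*) [Fintype ι] (σ2 : ℝ) : Measure (ι → ℝ) :=
  volume.withDensity fun x => ENNReal.ofReal
    ((2 * π * σ2) ^ (-(Fintype.card ι : ℝ) / 2) * Real.exp (-(enorm2 x) ^ 2 / (2 * σ2)))

/-- The Lebesgue density of the `N(0, σ² Q⁻¹)` distribution on `ι → ℝ`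
(for `Q` symmetric positive definite). -/
def gaussCovDens {ι : Type*} [Fintype ι] [DecidableEq ι] (σ2 : ℝ) (Q : Matrix ι ι ℝ)
    (x : ι → ℝ) : ℝ :=
  (2 * π * σ2) ^ (-(Fintype.card ι : ℝ) / 2) * Real.sqrt Q.det *
    Real.exp (-(x ⬝ᵥ Q.mulVec x) / (2 * σ2))

/-- The `N(0, σ² Q⁻¹)` distribution on `ι → ℝ` (for `Q` symmetric positive definite),
given by its Lebesgue density. -/
def gaussCov {ι : Type*} [Fintype ι] [DecidableEq ι] (σ2 : ℝ) (Q : Matrix ι ι ℝ) :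
    Measure (ι → ℝ) :=
  volume.withDensity fun x => ENNReal.ofReal (gaussCovDens σ2 Q x)

open Classical in
/-- Symmetric positive semidefinite square root (junk value `0` off the psd cone). -/
def msqrt {ι : Type*} [Fintype ι] [DecidableEq ι] (A : Matrix ι ι ℝ) : Matrix ι ι ℝ :=
  if h : A.PosSemidef then
    (h.1.eigenvectorUnitary : Matrix ι ι ℝ) * diagonal (Real.sqrt ∘ h.1.eigenvalues) *
      (star h.1.eigenvectorUnitary : Matrix ι ι ℝ)
  else 0

open Classical in
/-- Smallest eigenvalue of a symmetric matrix (junk value `0` otherwise). -/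
def lamMin {ι : Type*} [Fintype ι] [DecidableEq ι] (A : Matrix ι ι ℝ) : ℝ :=
  if h : A.IsHermitian then ⨅ i, h.eigenvalues i else 0

open Classical in
/-- Largest eigenvalue of a symmetric matrix (junk value `0` otherwise). -/
def lamMax {ι : Type*} [Fintype ι] [DecidableEq ι] (A : Matrix ι ι ℝ) : ℝ :=
  if h : A.IsHermitian then ⨆ i, h.eigenvalues i else 0

variable {n k₁ k₂ : ℕ}

/-- First block of columns of the design matrix. -/
def X1 (X : Matrix (Fin n) (Fin k₁ ⊕ Fin k₂) ℝ) : Matrix (Fin n) (Fin k₁) ℝ :=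
  X.submatrix id Sum.inl

/-- Second block of columns of the design matrix. -/
def X2 (X : Matrix (Fin n) (Fin k₁ ⊕ Fin k₂) ℝ) : Matrix (Fin n) (Fin k₂) ℝ :=
  X.submatrix id Sum.inr

/-- Unrestricted least squares estimator. -/
def betaU (X : Matrix (Fin n) (Fin k₁ ⊕ Fin k₂) ℝ) (Y : Fin n → ℝ) : (Fin k₁ ⊕ Fin k₂) → ℝ :=
  (Xᵀ * X)⁻¹.mulVec (Xᵀ.mulVec Y)

/-- Restricted least squares estimator. -/
def betaR (X : Matrix (Fin n) (Fin k₁ ⊕ Fin k₂) ℝ) (Y : Fin n → ℝ) : (Fin k₁ ⊕ Fin k₂) → ℝ :=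
  Sum.elim (((X1 X)ᵀ * X1 X)⁻¹.mulVec ((X1 X)ᵀ.mulVec Y)) (fun _ => 0)

/-- Risk estimate of the restricted model. -/
def rR (X : Matrix (Fin n) (Fin k₁ ⊕ Fin k₂) ℝ) (σ2 : ℝ) (Y : Fin n → ℝ) : ℝ :=
  Y ⬝ᵥ Y - betaR X Y ⬝ᵥ (Xᵀ * X).mulVec (betaR X Y) + σ2 * (2 * k₁ - n)

/-- Risk estimate of the unrestricted model. -/
def rU (X : Matrix (Fin n) (Fin k₁ ⊕ Fin k₂) ℝ) (σ2 : ℝ) (Y : Fin n → ℝ) : ℝ :=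
  Y ⬝ᵥ Y - betaU X Y ⬝ᵥ (Xᵀ * X).mulVec (betaU X Y) + σ2 * (2 * (k₁ + k₂) - n)

/-- The model averaging weight `λ̂`. -/
def lamHat (α σ2 : ℝ) (X : Matrix (Fin n) (Fin k₁ ⊕ Fin k₂) ℝ) (Y : Fin n → ℝ) : ℝ :=
  Real.exp (-(α * rR X σ2 Y) / σ2) /
    (Real.exp (-(α * rR X σ2 Y) / σ2) + Real.exp (-(α * rU X σ2 Y) / σ2))

/-- Leung and Barron's model averaging estimator `β̃`. -/
def mavg (α σ2 : ℝ) (X : Matrix (Fin n) (Fin k₁ ⊕ Fin k₂) ℝ) (Y : Fin n → ℝ) :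
    (Fin k₁ ⊕ Fin k₂) → ℝ :=
  lamHat α σ2 X Y • betaR X Y + (1 - lamHat α σ2 X Y) • betaU X Y

/-- Projection on the column space of `X₁`. -/
def projR (X : Matrix (Fin n) (Fin k₁ ⊕ Fin k₂) ℝ) : Matrix (Fin n) (Fin n) ℝ :=
  X1 X * ((X1 X)ᵀ * X1 X)⁻¹ * (X1 X)ᵀ

/-- Projection on the column space of `X`. -/
def projU (X : Matrix (Fin n) (Fin k₁ ⊕ Fin k₂) ℝ) : Matrix (Fin n) (Fin n) ℝ :=
  X * (Xᵀ * X)⁻¹ * Xᵀ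

/-- The distribution `P_{n,β,σ}` of `Y = Xβ + u`, `u ~ N(0, σ² Iₙ)`. -/
def Pmeas (X : Matrix (Fin n) (Fin k₁ ⊕ Fin k₂) ℝ) (β : (Fin k₁ ⊕ Fin k₂) → ℝ) (σ2 : ℝ) :
    Measure (Fin n → ℝ) :=
  (gaussPi (Fin n) σ2).map (fun u => X.mulVec β + u)

/-- The function `h_{a,b}(ξ) = ξ / (1 + a exp(−ξ²/b))`. -/
def hfun (a b ξ : ℝ) : ℝ := ξ / (1 + a * Real.exp (-ξ ^ 2 / b))

/-- The inverse `g_{a,b}` of `h_{a,b}`. -/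
def gfun (a b : ℝ) : ℝ → ℝ := Function.invFun (hfun a b)

open Classical in
/-- `g(‖w‖) w / ‖w‖`, with the convention that this is `0` for `w = 0`. -/
def gdir (a b : ℝ) {ι : Type*} [Fintype ι] (w : ι → ℝ) : ι → ℝ :=
  if w = 0 then 0 else (gfun a b (enorm2 w) / enorm2 w) • w


/-- The finite-sample density `f_{n,β,σ}` of `√n(β̃ − β)` (Theorem 3 of the paper). -/
def fdens {n k₁ k₂ : ℕ} (X : Matrix (Fin n) (Fin k₁ ⊕ Fin k₂) ℝ)
    (β : (Fin k₁ ⊕ Fin k₂) → ℝ) (σ2 α : ℝ) (t : (Fin k₁ ⊕ Fin k₂) → ℝ) : ℝ :=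
  let a := Real.exp (2 * α * k₂)
  let b := σ2 / α
  let S := (X2 X)ᵀ * (1 - projR X) * X2 X
  let w := (Real.sqrt n)⁻¹ • (msqrt S).mulVec ((t ∘ Sum.inr) + Real.sqrt n • (β ∘ Sum.inr))
  (2 * π * σ2) ^ (-((k₁ : ℝ) + k₂) / 2) * Real.sqrt (((n : ℝ)⁻¹ • (Xᵀ * X)).det) *
    Real.exp (-(enorm2 ((Real.sqrt n)⁻¹ •
        ((msqrt ((X1 X)ᵀ * X1 X)).mulVec (t ∘ Sum.inl) +
          ((msqrt ((X1 X)ᵀ * X1 X))⁻¹ * (X1 X)ᵀ * X2 X).mulVec (t ∘ Sum.inr)))) ^ 2 /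
      (2 * σ2)) *
    (1 + Real.exp (-(α / σ2) * gfun a b (enorm2 w) ^ 2 + 2 * α * k₂)) ^ (k₂ : ℕ) *
    (1 + (2 * α / σ2) * gfun a b (enorm2 w) ^ 2 *
        (1 + Real.exp ((α / σ2) * gfun a b (enorm2 w) ^ 2 - 2 * α * k₂))⁻¹)⁻¹ *
    Real.exp (-(enorm2 (gdir a b w - (msqrt S).mulVec (β ∘ Sum.inr))) ^ 2 / (2 * σ2))

/-- The density `f_{∞,γ}` of the limiting distribution (formula (13) of the paper),
stated for a general symmetric positive definite matrix in place of `Q`. -/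
def fInfty {k₁ k₂ : ℕ} (Q : Matrix (Fin k₁ ⊕ Fin k₂) (Fin k₁ ⊕ Fin k₂) ℝ) (σ2 α : ℝ)
    (γ : Fin k₂ → ℝ) (t : (Fin k₁ ⊕ Fin k₂) → ℝ) : ℝ :=
  let a := Real.exp (2 * α * k₂)
  let b := σ2 / α
  let S := Q.toBlocks₂₂ - Q.toBlocks₂₁ * Q.toBlocks₁₁⁻¹ * Q.toBlocks₁₂
  let w := (msqrt S).mulVec ((t ∘ Sum.inr) + γ)
  (2 * π * σ2) ^ (-((k₁ : ℝ) + k₂) / 2) * Real.sqrt Q.det *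
    Real.exp (-(enorm2 ((msqrt Q.toBlocks₁₁).mulVec (t ∘ Sum.inl) +
        ((msqrt Q.toBlocks₁₁)⁻¹ * Q.toBlocks₁₂).mulVec (t ∘ Sum.inr))) ^ 2 / (2 * σ2)) *
    (1 + Real.exp (-(α / σ2) * gfun a b (enorm2 w) ^ 2 + 2 * α * k₂)) ^ (k₂ : ℕ) *
    (1 + (2 * α / σ2) * gfun a b (enorm2 w) ^ 2 *
        (1 + Real.exp ((α / σ2) * gfun a b (enorm2 w) ^ 2 - 2 * α * k₂))⁻¹)⁻¹ *
    Real.exp (-(enorm2 (gdir a b w - (msqrt S).mulVec γ)) ^ 2 / (2 * σ2))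


/-!
By orthogonality, `r̂(R) - r̂(U)` is `‖X (β̂(U) - β̂(R))‖²` minus the constant `2 σ² k₂`, so the
weight `λ̂` of the restricted estimator decays exponentially in this squared distance. As
`x * exp (-x)` is bounded, averaging moves the fit away from the unrestricted one by at most a
constant, whatever `β` is. Hence `‖X (β̃ - β)‖²` is at most a constant plus twice the squared length
of the projected noise, whose mean is `σ² (k₁ + k₂)`. The traces of `(XᵀX)⁻¹` and of `AᵀA` turn this
into a bound on `‖A (β̃ - β)‖²` of order `1 / n`, uniform in `β`, to which Markov applies.
-/

section MatrixBounds

variable {ι κ : Type*} [Fintype ι]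

lemma enorm2_sq (v : ι → ℝ) : enorm2 v ^ 2 = v ⬝ᵥ v := by
  rw [enorm2, Real.sq_sqrt (Finset.sum_nonneg fun i _ => sq_nonneg _)]
  simp only [dotProduct, pow_two]

lemma enorm2_smul_sq (c : ℝ) (v : ι → ℝ) : enorm2 (c • v) ^ 2 = c ^ 2 * enorm2 v ^ 2 := by
  simp only [enorm2_sq, smul_dotProduct, dotProduct_smul, smul_eq_mul]
  ring

lemma enorm2_sub_sq_le (v w : ι → ℝ) :
    enorm2 (v - w) ^ 2 ≤ 2 * (enorm2 v ^ 2 + enorm2 w ^ 2) := by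
  have parallelogram :
      enorm2 (v - w) ^ 2 + enorm2 (v + w) ^ 2 = 2 * (enorm2 v ^ 2 + enorm2 w ^ 2) := by
    simp only [enorm2_sq, sub_dotProduct, dotProduct_sub, add_dotProduct, dotProduct_add]
    ring
  linarith [sq_nonneg (enorm2 (v + w))]

lemma posSemidef_transpose_mul_self [Finite κ] (B : Matrix ι κ ℝ) : (Bᵀ * B).PosSemidef := by
  simpa only [conjTranspose_eq_transpose_of_trivial] using posSemidef_conjTranspose_mul_self B

variable [Fintype κ]

lemma enorm2_mulVec_sq_le (B : Matrix ι κ ℝ) (w : κ → ℝ) :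
    enorm2 (B *ᵥ w) ^ 2 ≤ (Bᵀ * B).trace * enorm2 w ^ 2 := by
  have trace_eq : (Bᵀ * B).trace = ∑ i, ∑ j, B i j ^ 2 := by
    rw [Finset.sum_comm]
    simp only [trace, diag_apply, mul_apply, transpose_apply, pow_two]
  rw [trace_eq, Finset.sum_mul, enorm2_sq, enorm2_sq]
  refine Finset.sum_le_sum fun i _ => ?_
  simpa only [dotProduct, mulVec, pow_two] using
    Finset.sum_mul_sq_le_sq_mul_sq Finset.univ (B i) w

lemma posDef_gram_of_rank_eq_card {B : Matrix ι κ ℝ} (hB : B.rank = Fintype.card κ) :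
    (Bᵀ * B).PosDef := by
  have inj : Function.Injective B.mulVec := by
    rw [mulVec_injective_iff, linearIndependent_iff_card_eq_finrank_span, ← hB]
    exact B.rank_eq_finrank_span_cols
  simpa only [conjTranspose_eq_transpose_of_trivial] using PosDef.conjTranspose_mul_self B inj

variable [DecidableEq κ]

lemma trace_le_card_mul_lamMax {G : Matrix κ κ ℝ} (hG : G.IsHermitian) :
    G.trace ≤ Fintype.card κ * lamMax G := by
  rw [lamMax, dif_pos hG, hG.trace_eq_sum_eigenvalues, ← nsmul_eq_mul]
  exact Finset.sum_le_card_nsmul _ _ _ fun i _ =>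
    le_ciSup (Set.finite_range hG.eigenvalues).bddAbove i

lemma tendsto_nat_mul_trace_inv {G : ℕ → Matrix κ κ ℝ} {Q : Matrix κ κ ℝ} (hQ : Q.det ≠ 0)
    (hG : Tendsto (fun n : ℕ => (n : ℝ)⁻¹ • G n) atTop (𝓝 Q)) :
    Tendsto (fun n : ℕ => n * (G n)⁻¹.trace) atTop (𝓝 Q⁻¹.trace) := by
  have inv_continuousAt : ContinuousAt Inv.inv Q := by
    refine continuousAt_matrix_inv Q ?_
    rw [Ring.inverse_eq_inv']
    exact continuousAt_inv₀ hQ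
  have trace_tendsto : Tendsto (fun n : ℕ => ((n : ℝ)⁻¹ • G n)⁻¹.trace) atTop (𝓝 Q⁻¹.trace) :=
    (continuous_id.matrix_trace.tendsto _).comp (inv_continuousAt.tendsto.comp hG)
  have det_ne_zero : ∀ᶠ n : ℕ in atTop, ((n : ℝ)⁻¹ • G n).det ≠ 0 :=
    ((continuous_id.matrix_det.tendsto Q).comp hG).eventually_ne hQ
  refine trace_tendsto.congr' ?_
  filter_upwards [det_ne_zero, eventually_ne_atTop 0] with n hdet hn
  have hn' : (n : ℝ) ≠ 0 := Nat.cast_ne_zero.2 hn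
  have hG_det : IsUnit (G n).det := by
    rw [det_smul] at hdet
    exact (right_ne_zero_of_mul hdet).isUnit
  have inv_eq : ((n : ℝ)⁻¹ • G n)⁻¹ = (n : ℝ) • (G n)⁻¹ := by
    refine inv_eq_right_inv ?_
    rw [smul_mul_smul_comm, mul_nonsing_inv _ hG_det, inv_mul_cancel₀ hn', one_smul]
  rw [inv_eq, trace_smul, smul_eq_mul]

end MatrixBounds

section LeastSquares

variable {ι κ : Type*} [Fintype ι] [Fintype κ] [DecidableEq κ] {B : Matrix ι κ ℝ}

/-- The least squares coefficients of the regression of `y` on the columns of `B`, given by the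
normal equations; it specializes to the unrestricted and to the restricted estimator. -/
def leastSquares (B : Matrix ι κ ℝ) (y : ι → ℝ) : κ → ℝ := (Bᵀ * B)⁻¹ *ᵥ (Bᵀ *ᵥ y)

lemma leastSquares_add (y z : ι → ℝ) :
    leastSquares B (y + z) = leastSquares B y + leastSquares B z := by
  simp only [leastSquares, mulVec_add]

lemma leastSquares_mulVec (hB : (Bᵀ * B).PosDef) (b : κ → ℝ) : leastSquares B (B *ᵥ b) = b := by
  rw [leastSquares, mulVec_mulVec, mulVec_mulVec, Matrix.mul_assoc,
    nonsing_inv_mul _ hB.det_pos.ne'.isUnit, one_mulVec]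

lemma mulVec_leastSquares_dotProduct_mulVec (hB : (Bᵀ * B).PosDef) (y : ι → ℝ) (b : κ → ℝ) :
    B *ᵥ leastSquares B y ⬝ᵥ B *ᵥ b = y ⬝ᵥ B *ᵥ b := by
  have normal_equations : Bᵀ *ᵥ (B *ᵥ leastSquares B y) = Bᵀ *ᵥ y := by
    rw [leastSquares, mulVec_mulVec, mulVec_mulVec, mul_nonsing_inv _ hB.det_pos.ne'.isUnit,
      one_mulVec]
  rw [dotProduct_mulVec, dotProduct_mulVec, ← mulVec_transpose, ← mulVec_transpose,
    normal_equations]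

lemma enorm2_sq_le_trace_inv_gram_mul (hB : (Bᵀ * B).PosDef) (b : κ → ℝ) :
    enorm2 b ^ 2 ≤ (Bᵀ * B)⁻¹.trace * enorm2 (B *ᵥ b) ^ 2 := by
  have hdet : IsUnit (Bᵀ * B).det := hB.det_pos.ne'.isUnit
  have gram_pseudoinverse :
      ((Bᵀ * B)⁻¹ * Bᵀ) * ((Bᵀ * B)⁻¹ * Bᵀ)ᵀ = (Bᵀ * B)⁻¹ := by
    rw [transpose_mul, transpose_transpose, transpose_nonsing_inv, transpose_mul,
      transpose_transpose, Matrix.mul_assoc, ← Matrix.mul_assoc Bᵀ, mul_nonsing_inv _ hdet,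
      Matrix.mul_one]
  have pseudoinverse_mulVec : ((Bᵀ * B)⁻¹ * Bᵀ) *ᵥ (B *ᵥ b) = b := by
    rw [← mulVec_mulVec]
    exact leastSquares_mulVec hB b
  have bound := enorm2_mulVec_sq_le ((Bᵀ * B)⁻¹ * Bᵀ) (B *ᵥ b)
  rwa [pseudoinverse_mulVec, trace_mul_comm, gram_pseudoinverse] at bound

end LeastSquares

section GaussianQuadraticForms

open ProbabilityTheory

variable {ι : Type*} [Fintype ι]

lemma pi_withDensity_ofReal {E : ι → Type*} [∀ i, MeasurableSpace (E i)]
    (μ : ∀ i, Measure (E i)) [∀ i, SigmaFinite (μ i)] {f : ∀ i, E i → ℝ}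
    (hf : ∀ i, Integrable (f i) (μ i)) (hf_nonneg : ∀ i x, 0 ≤ f i x) :
    Measure.pi (fun i => (μ i).withDensity fun x => ENNReal.ofReal (f i x)) =
      (Measure.pi μ).withDensity fun x => ENNReal.ofReal (∏ i, f i (x i)) := by
  refine Measure.pi_eq fun t ht => ?_
  rw [withDensity_apply _ (MeasurableSet.univ_pi ht), Measure.restrict_pi_pi,
    ← ofReal_integral_eq_lintegral_ofReal
      (Integrable.fintype_prod_dep fun i => (hf i).restrict)
      (ae_of_all _ fun x => Finset.prod_nonneg fun i _ => hf_nonneg i (x i)),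
    integral_fintype_prod_eq_prod,
    ENNReal.ofReal_prod_of_nonneg fun i _ => integral_nonneg (hf_nonneg i)]
  refine Finset.prod_congr rfl fun i _ => ?_
  rw [withDensity_apply _ (ht i), ofReal_integral_eq_lintegral_ofReal (hf i).restrict
    (ae_of_all _ (hf_nonneg i))]

lemma prod_gaussianPDFReal_zero (v : ℝ≥0) (x : ι → ℝ) :
    ∏ i, gaussianPDFReal 0 v (x i) =
      (2 * π * v) ^ (-(Fintype.card ι : ℝ) / 2) * Real.exp (-(enorm2 x) ^ 2 / (2 * v)) := by
  have hv : 0 ≤ 2 * π * v := by positivity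
  simp only [gaussianPDFReal, sub_zero]
  rw [Finset.prod_mul_distrib, Finset.prod_const, ← Real.exp_sum, ← Finset.sum_div,
    Finset.sum_neg_distrib, enorm2, Real.sq_sqrt (Finset.sum_nonneg fun i _ => sq_nonneg _),
    Finset.card_univ]
  congr 1
  rw [Real.sqrt_eq_rpow, ← Real.rpow_neg hv, ← Real.rpow_mul_natCast hv]
  ring_nf

lemma gaussPi_eq_pi {s : ℝ} (hs : 0 < s) :
    gaussPi ι s = Measure.pi fun _ : ι => gaussianReal 0 s.toNNReal := by
  have hv : s.toNNReal ≠ 0 := (Real.toNNReal_pos.2 hs).ne'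
  simp only [gaussianReal_of_var_ne_zero 0 hv, gaussianPDF_def]
  rw [pi_withDensity_ofReal _ (fun _ => integrable_gaussianPDFReal 0 _)
    (fun _ => gaussianPDFReal_nonneg 0 _)]
  simp only [prod_gaussianPDFReal_zero, Real.coe_toNNReal s hs.le, gaussPi, volume_pi]

lemma integral_eval_mul_eval_pi [DecidableEq ι] {μ : ι → Measure ℝ}
    [∀ i, IsProbabilityMeasure (μ i)] (hμ : ∀ i, MemLp id 2 (μ i))
    (hμ_zero : ∀ i, ∫ x, x ∂μ i = 0) (i j : ι) :
    ∫ u, u i * u j ∂Measure.pi μ = if i = j then Var[id; μ i] else 0 := by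
  have memLp_eval (i : ι) : MemLp (fun u : ι → ℝ => u i) 2 (Measure.pi μ) :=
    (hμ i).comp_measurePreserving (measurePreserving_eval μ i)
  have integral_eval_zero (i : ι) : ∫ u, u i ∂Measure.pi μ = 0 := by
    rw [integral_eval, hμ_zero]
  split_ifs with hij
  · subst hij
    have integral_sq := integral_comp_eval (μ := μ) (i := i) (f := fun x : ℝ => x * x) (by fun_prop)
    rw [integral_sq, variance_of_integral_eq_zero aemeasurable_id (hμ_zero i)]
    simp only [id_eq, pow_two]
  · have indep : IndepFun (fun u : ι → ℝ => u i) (fun u => u j) (Measure.pi μ) :=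
      (iIndepFun_pi (X := fun _ => id) fun _ => aemeasurable_id).indepFun hij
    have cov_eq := covariance_eq_sub (memLp_eval i) (memLp_eval j)
    rw [integral_eval_zero, zero_mul, sub_zero,
      indep.covariance_eq_zero (memLp_eval i) (memLp_eval j)] at cov_eq
    exact cov_eq.symm

lemma dotProduct_mulVec_eq_sum (P : Matrix ι ι ℝ) (u : ι → ℝ) :
    u ⬝ᵥ P *ᵥ u = ∑ i, ∑ j, P i j * (u j * u i) := by
  simp only [dotProduct, mulVec, Finset.mul_sum]
  exact Finset.sum_congr rfl fun i _ => Finset.sum_congr rfl fun j _ => by ring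

section SecondMoments

variable {Ω : Type*} [MeasurableSpace Ω] {μ : Measure Ω} {U : Ω → ι → ℝ}

lemma integrable_dotProduct_mulVec (hU : ∀ i j, Integrable (fun ω => U ω i * U ω j) μ)
    (P : Matrix ι ι ℝ) : Integrable (fun ω => U ω ⬝ᵥ P *ᵥ U ω) μ := by
  simp only [dotProduct_mulVec_eq_sum]
  exact integrable_finsetSum _ fun i _ => integrable_finsetSum _ fun j _ => (hU j i).const_mul _

lemma integral_dotProduct_mulVec (hU : ∀ i j, Integrable (fun ω => U ω i * U ω j) μ)
    (P : Matrix ι ι ℝ) :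
    ∫ ω, U ω ⬝ᵥ P *ᵥ U ω ∂μ = (P * of fun i j => ∫ ω, U ω i * U ω j ∂μ).trace := by
  have hP (i j : ι) : Integrable (fun ω => P i j * (U ω j * U ω i)) μ := (hU j i).const_mul _
  simp only [dotProduct_mulVec_eq_sum]
  rw [integral_finsetSum _ fun i _ => integrable_finsetSum _ fun j _ => hP i j]
  simp only [integral_finsetSum _ fun j _ => hP _ j, integral_const_mul, trace, diag_apply,
    mul_apply, of_apply]

end SecondMoments

lemma integrable_eval_mul_eval_gaussPi {s : ℝ} (hs : 0 < s) (i j : ι) :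
    Integrable (fun u : ι → ℝ => u i * u j) (gaussPi ι s) := by
  rw [gaussPi_eq_pi hs]
  have memLp_eval (i : ι) := (memLp_id_gaussianReal' 2 ENNReal.ofNat_ne_top).comp_measurePreserving
    (measurePreserving_eval (fun _ : ι => gaussianReal 0 s.toNNReal) i)
  exact (memLp_eval i).integrable_mul (memLp_eval j)

lemma integral_dotProduct_mulVec_gaussPi {s : ℝ} (hs : 0 < s) (P : Matrix ι ι ℝ) :
    ∫ u, u ⬝ᵥ P *ᵥ u ∂gaussPi ι s = s * P.trace := by
  classical
  have second_moments : (of fun i j => ∫ u, u i * u j ∂gaussPi ι s) = s • (1 : Matrix ι ι ℝ) := by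
    ext i j
    rw [gaussPi_eq_pi hs, of_apply, integral_eval_mul_eval_pi
      (fun _ => memLp_id_gaussianReal' 2 ENNReal.ofNat_ne_top)
      (fun _ => integral_id_gaussianReal), variance_id_gaussianReal, Real.coe_toNNReal s hs.le]
    simp only [Matrix.smul_apply, one_apply, smul_eq_mul, mul_ite, mul_one, mul_zero]
  rw [integral_dotProduct_mulVec (U := fun u => u) (integrable_eval_mul_eval_gaussPi hs),
    second_moments, Matrix.mul_smul, Matrix.mul_one, trace_smul, smul_eq_mul]

lemma gaussPi_le_affine_quadraticForm_le {s : ℝ} (hs : 0 < s) {P : Matrix ι ι ℝ}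
    (hP : P.PosSemidef) {a b t : ℝ} (ha : 0 ≤ a) (hb : 0 ≤ b) (ht : 0 < t) :
    gaussPi ι s {u | t ≤ a * (u ⬝ᵥ P *ᵥ u + b)} ≤
      ENNReal.ofReal (a * (s * P.trace + b) / t) := by
  have : IsProbabilityMeasure (gaussPi ι s) := by
    rw [gaussPi_eq_pi hs]
    infer_instance
  have hint : Integrable (fun u : ι → ℝ => u ⬝ᵥ P *ᵥ u) (gaussPi ι s) :=
    integrable_dotProduct_mulVec (U := id) (integrable_eval_mul_eval_gaussPi hs) P
  have nonneg (u : ι → ℝ) : 0 ≤ a * (u ⬝ᵥ P *ᵥ u + b) :=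
    mul_nonneg ha (add_nonneg (by simpa using hP.dotProduct_mulVec_nonneg u) hb)
  have mean : ∫ u, a * (u ⬝ᵥ P *ᵥ u + b) ∂gaussPi ι s = a * (s * P.trace + b) := by
    rw [integral_const_mul, integral_add hint (integrable_const b),
      integral_dotProduct_mulVec_gaussPi hs, integral_const, probReal_univ, one_smul]
  have markov := mul_meas_ge_le_integral_of_nonneg (ae_of_all _ nonneg)
    ((hint.add (integrable_const b)).const_mul a) t
  rw [← ofReal_measureReal]
  exact ENNReal.ofReal_le_ofReal ((le_div_iff₀' ht).2 (markov.trans_eq mean))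

end GaussianQuadraticForms

section ModelAveraging

variable {X : Matrix (Fin n) (Fin k₁ ⊕ Fin k₂) ℝ} {α s : ℝ}

lemma mulVec_betaR (Y : Fin n → ℝ) : X *ᵥ betaR X Y = X1 X *ᵥ leastSquares (X1 X) Y := by
  change X *ᵥ Sum.elim (leastSquares (X1 X) Y) (fun _ => 0) = _
  generalize leastSquares (X1 X) Y = b
  ext i
  simp [mulVec, dotProduct, X1]

lemma posDef_gram_X1 (hX : (Xᵀ * X).PosDef) : ((X1 X)ᵀ * X1 X).PosDef :=
  hX.submatrix Sum.inl_injective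

lemma enorm2_mulVec_betaU_sub_betaR_sq (hX : (Xᵀ * X).PosDef) (Y : Fin n → ℝ) :
    enorm2 (X *ᵥ (betaU X Y - betaR X Y)) ^ 2 =
      enorm2 (X *ᵥ betaU X Y) ^ 2 - enorm2 (X *ᵥ betaR X Y) ^ 2 := by
  have cross_eq : X *ᵥ betaU X Y ⬝ᵥ X *ᵥ betaR X Y = X *ᵥ betaR X Y ⬝ᵥ X *ᵥ betaR X Y := by
    have hU := mulVec_leastSquares_dotProduct_mulVec hX Y (betaR X Y)
    have hR := mulVec_leastSquares_dotProduct_mulVec (posDef_gram_X1 hX) Y (leastSquares (X1 X) Y)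
    rw [← mulVec_betaR] at hR
    exact hU.trans hR.symm
  simp only [enorm2_sq, mulVec_sub, sub_dotProduct, dotProduct_sub,
    dotProduct_comm (X *ᵥ betaR X Y) (X *ᵥ betaU X Y), cross_eq]
  ring

lemma rR_sub_rU (hX : (Xᵀ * X).PosDef) (s : ℝ) (Y : Fin n → ℝ) :
    rR X s Y - rU X s Y = enorm2 (X *ᵥ (betaU X Y - betaR X Y)) ^ 2 - 2 * s * k₂ := by
  have quadratic_form_gram (b : Fin k₁ ⊕ Fin k₂ → ℝ) :
      b ⬝ᵥ (Xᵀ * X) *ᵥ b = enorm2 (X *ᵥ b) ^ 2 := by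
    rw [enorm2_sq, ← mulVec_mulVec, dotProduct_transpose_mulVec]
  rw [enorm2_mulVec_betaU_sub_betaR_sq hX, rR, rU, quadratic_form_gram, quadratic_form_gram]
  ring

lemma lamHat_nonneg (Y : Fin n → ℝ) : 0 ≤ lamHat α s X Y := by
  rw [lamHat]
  positivity

lemma lamHat_le_one (Y : Fin n → ℝ) : lamHat α s X Y ≤ 1 :=
  div_le_one_of_le₀ (le_add_of_nonneg_right (Real.exp_nonneg _)) (by positivity)

lemma lamHat_le_exp (Y : Fin n → ℝ) :
    lamHat α s X Y ≤ Real.exp (-(α * (rR X s Y - rU X s Y) / s)) := by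
  calc lamHat α s X Y
      ≤ Real.exp (-(α * rR X s Y) / s) / Real.exp (-(α * rU X s Y) / s) := by
        rw [lamHat]
        gcongr
        exact le_add_of_nonneg_left (Real.exp_nonneg _)
    _ = Real.exp (-(α * (rR X s Y - rU X s Y) / s)) := by
        rw [← Real.exp_sub]
        ring_nf

lemma lamHat_mul_enorm2_sq_le (hX : (Xᵀ * X).PosDef) (hα : 0 < α) (hs : 0 < s) (Y : Fin n → ℝ) :
    lamHat α s X Y * enorm2 (X *ᵥ (betaU X Y - betaR X Y)) ^ 2 ≤
      Real.exp (2 * α * k₂ - 1) * (s / α) := by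
  set q := enorm2 (X *ᵥ (betaU X Y - betaR X Y)) ^ 2 with hq
  set x := α * q / s with hx
  have exponent_eq : -(α * (rR X s Y - rU X s Y) / s) = 2 * α * k₂ + -x := by
    rw [rR_sub_rU hX, ← hq, hx]
    field_simp
    ring
  calc lamHat α s X Y * q
      ≤ Real.exp (2 * α * k₂ + -x) * q := by
        rw [← exponent_eq]
        exact mul_le_mul_of_nonneg_right (lamHat_le_exp Y) (sq_nonneg _)
    _ = Real.exp (2 * α * k₂) * (s / α) * (x * Real.exp (-x)) := by
        rw [Real.exp_add, hx]
        field_simp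
    _ ≤ Real.exp (2 * α * k₂) * (s / α) * Real.exp (-1) := by
        gcongr
        exact Real.mul_exp_neg_le_exp_neg_one x
    _ = Real.exp (2 * α * k₂ - 1) * (s / α) := by
        rw [sub_eq_add_neg, Real.exp_add]
        ring

lemma projU_mulVec (u : Fin n → ℝ) : projU X *ᵥ u = X *ᵥ betaU X u := by
  simp only [projU, betaU, mulVec_mulVec, Matrix.mul_assoc]

lemma dotProduct_projU_mulVec (hX : (Xᵀ * X).PosDef) (u : Fin n → ℝ) :
    u ⬝ᵥ projU X *ᵥ u = enorm2 (X *ᵥ betaU X u) ^ 2 := by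
  rw [projU_mulVec, enorm2_sq]
  exact (mulVec_leastSquares_dotProduct_mulVec hX u (betaU X u)).symm

lemma posSemidef_projU (X : Matrix (Fin n) (Fin k₁ ⊕ Fin k₂) ℝ) : (projU X).PosSemidef := by
  simpa only [projU, conjTranspose_eq_transpose_of_trivial] using
    (posSemidef_transpose_mul_self X).inv.mul_mul_conjTranspose_same X

lemma trace_projU (hX : (Xᵀ * X).PosDef) : (projU X).trace = k₁ + k₂ := by
  rw [projU, Matrix.mul_assoc, trace_mul_comm, Matrix.mul_assoc,
    nonsing_inv_mul _ hX.det_pos.ne'.isUnit]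
  simp

lemma mavg_sub (hX : (Xᵀ * X).PosDef) (β : Fin k₁ ⊕ Fin k₂ → ℝ) (u : Fin n → ℝ) :
    mavg α s X (X *ᵥ β + u) - β = betaU X u -
      lamHat α s X (X *ᵥ β + u) • (betaU X (X *ᵥ β + u) - betaR X (X *ᵥ β + u)) := by
  have betaU_eq : betaU X (X *ᵥ β + u) = β + betaU X u :=
    (leastSquares_add _ _).trans (congrArg (· + _) (leastSquares_mulVec hX β))
  rw [eq_sub_of_add_eq' betaU_eq.symm, mavg]
  module

lemma enorm2_mulVec_mavg_sub_sq_le (hX : (Xᵀ * X).PosDef) (hα : 0 < α) (hs : 0 < s)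
    (β : Fin k₁ ⊕ Fin k₂ → ℝ) (u : Fin n → ℝ) :
    enorm2 (X *ᵥ (mavg α s X (X *ᵥ β + u) - β)) ^ 2 ≤
      2 * (u ⬝ᵥ projU X *ᵥ u + Real.exp (2 * α * k₂ - 1) * (s / α)) := by
  set Y := X *ᵥ β + u with hY
  have shrinkage_le : enorm2 (lamHat α s X Y • X *ᵥ (betaU X Y - betaR X Y)) ^ 2 ≤
      Real.exp (2 * α * k₂ - 1) * (s / α) := by
    rw [enorm2_smul_sq]
    have sq_le : lamHat α s X Y ^ 2 ≤ lamHat α s X Y :=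
      pow_le_of_le_one (lamHat_nonneg Y) (lamHat_le_one Y) two_ne_zero
    exact (mul_le_mul_of_nonneg_right sq_le (sq_nonneg _)).trans
      (lamHat_mul_enorm2_sq_le hX hα hs Y)
  rw [mavg_sub hX, ← hY, mulVec_sub, mulVec_smul, dotProduct_projU_mulVec hX]
  exact (enorm2_sub_sq_le _ _).trans (by gcongr)

lemma enorm2_mulVec_mavg_sub_mulVec_sq_le {q : ℕ} (A : Matrix (Fin q) (Fin k₁ ⊕ Fin k₂) ℝ)
    (hX : (Xᵀ * X).PosDef) (hα : 0 < α) (hs : 0 < s) (β : Fin k₁ ⊕ Fin k₂ → ℝ) (u : Fin n → ℝ) :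
    enorm2 (A *ᵥ mavg α s X (X *ᵥ β + u) - A *ᵥ β) ^ 2 ≤
      (Aᵀ * A).trace * (Xᵀ * X)⁻¹.trace *
        (2 * (u ⬝ᵥ projU X *ᵥ u + Real.exp (2 * α * k₂ - 1) * (s / α))) := by
  have trace_A_nonneg : 0 ≤ (Aᵀ * A).trace := (posSemidef_transpose_mul_self A).trace_nonneg
  have trace_X_nonneg : 0 ≤ (Xᵀ * X)⁻¹.trace := hX.posSemidef.inv.trace_nonneg
  set δ := mavg α s X (X *ᵥ β + u) - β with hδ
  calc enorm2 (A *ᵥ mavg α s X (X *ᵥ β + u) - A *ᵥ β) ^ 2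
      = enorm2 (A *ᵥ δ) ^ 2 := by rw [hδ, mulVec_sub]
    _ ≤ (Aᵀ * A).trace * enorm2 δ ^ 2 := enorm2_mulVec_sq_le A δ
    _ ≤ (Aᵀ * A).trace * ((Xᵀ * X)⁻¹.trace * enorm2 (X *ᵥ δ) ^ 2) := by
        gcongr
        exact enorm2_sq_le_trace_inv_gram_mul hX δ
    _ ≤ _ := by
        rw [← mul_assoc]
        gcongr
        exact enorm2_mulVec_mavg_sub_sq_le hX hα hs β u

lemma Pmeas_apply (X : Matrix (Fin n) (Fin k₁ ⊕ Fin k₂) ℝ) (β : Fin k₁ ⊕ Fin k₂ → ℝ) (s : ℝ)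
    (S : Set (Fin n → ℝ)) : Pmeas X β s S = gaussPi (Fin n) s {u | X *ᵥ β + u ∈ S} :=
  (MeasurableEquiv.addLeft (X *ᵥ β)).map_apply S

/-- An upper bound, free of `n` and `β`, for the mean squared prediction error
`E‖Xβ̃ − Xβ‖²`: twice the sum of the prediction risk of the unrestricted estimator and of a bound
for the squared distance between the averaged and the unrestricted fit. -/
def predictionRiskBound (k₁ k₂ : ℕ) (α s : ℝ) : ℝ :=
  2 * (s * (k₁ + k₂) + Real.exp (2 * α * k₂ - 1) * (s / α))

lemma predictionRiskBound_nonneg (k₁ k₂ : ℕ) (hα : 0 < α) (hs : 0 < s) :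
    0 ≤ predictionRiskBound k₁ k₂ α s := by
  rw [predictionRiskBound]
  positivity

lemma Pmeas_le_mul_enorm2_mavg_sub_le {q : ℕ} (A : Matrix (Fin q) (Fin k₁ ⊕ Fin k₂) ℝ)
    (hX : (Xᵀ * X).PosDef) (hα : 0 < α) (hs : 0 < s) (β : Fin k₁ ⊕ Fin k₂ → ℝ) (r : ℝ) {t : ℝ}
    (ht : 0 < t) :
    Pmeas X β s {Y | t ≤ r * enorm2 (A *ᵥ mavg α s X Y - A *ᵥ β)} ≤
      ENNReal.ofReal (r ^ 2 * ((Aᵀ * A).trace * (Xᵀ * X)⁻¹.trace *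
        predictionRiskBound k₁ k₂ α s) / t ^ 2) := by
  have trace_A_nonneg : 0 ≤ (Aᵀ * A).trace := (posSemidef_transpose_mul_self A).trace_nonneg
  have trace_X_nonneg : 0 ≤ (Xᵀ * X)⁻¹.trace := hX.posSemidef.inv.trace_nonneg
  set a := r ^ 2 * ((Aᵀ * A).trace * (Xᵀ * X)⁻¹.trace * 2) with ha
  set b := Real.exp (2 * α * k₂ - 1) * (s / α) with hb
  have event_subset : {u | X *ᵥ β + u ∈ {Y | t ≤ r * enorm2 (A *ᵥ mavg α s X Y - A *ᵥ β)}} ⊆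
      {u | t ^ 2 ≤ a * (u ⬝ᵥ projU X *ᵥ u + b)} := by
    intro u (hu : t ≤ _)
    calc t ^ 2 ≤ r ^ 2 * enorm2 (A *ᵥ mavg α s X (X *ᵥ β + u) - A *ᵥ β) ^ 2 := by
          rw [← mul_pow]
          gcongr
      _ ≤ r ^ 2 * ((Aᵀ * A).trace * (Xᵀ * X)⁻¹.trace * (2 * (u ⬝ᵥ projU X *ᵥ u + b))) := by
          gcongr
          exact enorm2_mulVec_mavg_sub_mulVec_sq_le A hX hα hs β u
      _ = a * (u ⬝ᵥ projU X *ᵥ u + b) := by rw [ha]; ring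
  rw [Pmeas_apply]
  refine (measure_mono event_subset).trans ((gaussPi_le_affine_quadraticForm_le hs
    (posSemidef_projU X) (by positivity) (by positivity) (pow_pos ht 2)).trans_eq ?_)
  rw [trace_projU hX, ha, hb, predictionRiskBound]
  ring_nf

lemma Pmeas_le_mul_sqrt_mul_enorm2_mavg_sub_le {q : ℕ}
    (A : Matrix (Fin q) (Fin k₁ ⊕ Fin k₂) ℝ) (hX : (Xᵀ * X).PosDef) (hα : 0 < α) (hs : 0 < s)
    {K T : ℝ} (hA : (Aᵀ * A).trace ≤ K) (hT : n * (Xᵀ * X)⁻¹.trace ≤ T)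
    (β : Fin k₁ ⊕ Fin k₂ → ℝ) (r : ℝ) {t : ℝ} (ht : 0 < t) :
    Pmeas X β s {Y | t ≤ r * (√n * enorm2 (A *ᵥ mavg α s X Y - A *ᵥ β))} ≤
      ENNReal.ofReal (r ^ 2 * (K * T * predictionRiskBound k₁ k₂ α s) / t ^ 2) := by
  have trace_A_nonneg : 0 ≤ (Aᵀ * A).trace := (posSemidef_transpose_mul_self A).trace_nonneg
  have trace_X_nonneg : 0 ≤ (Xᵀ * X)⁻¹.trace := hX.posSemidef.inv.trace_nonneg
  have risk_nonneg := predictionRiskBound_nonneg k₁ k₂ hα hs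
  have bound := Pmeas_le_mul_enorm2_mavg_sub_le A hX hα hs β (r * √n) ht
  simp only [mul_assoc] at bound
  refine bound.trans (ENNReal.ofReal_le_ofReal ?_)
  calc (r * √n) ^ 2 * ((Aᵀ * A).trace * ((Xᵀ * X)⁻¹.trace * predictionRiskBound k₁ k₂ α s)) / t ^ 2
      = r ^ 2 * ((Aᵀ * A).trace * (n * (Xᵀ * X)⁻¹.trace) * predictionRiskBound k₁ k₂ α s) /
          t ^ 2 := by
        rw [mul_pow, Real.sq_sqrt n.cast_nonneg]
        ring
    _ ≤ _ := by
        gcongr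
        exact trace_A_nonneg.trans hA

end ModelAveraging

section UniformConsistency

variable {X : ∀ n : ℕ, Matrix (Fin n) (Fin k₁ ⊕ Fin k₂) ℝ} {p : ℕ → ℕ}
  {A : ∀ n : ℕ, Matrix (Fin (p n)) (Fin k₁ ⊕ Fin k₂) ℝ} {α s K T : ℝ}

lemma tendsto_iSup_Pmeas_sqrt_mul_enorm2_mavg_sub
    (hX : ∀ n, k₁ + k₂ ≤ n → ((X n)ᵀ * X n).PosDef) (hα : 0 < α) (hs : 0 < s)
    (hA : ∀ n, ((A n)ᵀ * A n).trace ≤ K) (hT : ∀ n : ℕ, n * ((X n)ᵀ * X n)⁻¹.trace ≤ T) :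
    Tendsto (fun M : ℝ => ⨆ n, ⨆ (_ : k₁ + k₂ ≤ n), ⨆ β : Fin k₁ ⊕ Fin k₂ → ℝ,
      Pmeas (X n) β s {Y | M ≤ √n * enorm2 (A n *ᵥ mavg α s (X n) Y - A n *ᵥ β)}) atTop (𝓝 0) := by
  have bound_tendsto :
      Tendsto (fun M : ℝ => ENNReal.ofReal
        (1 ^ 2 * (K * T * predictionRiskBound k₁ k₂ α s) / M ^ 2)) atTop (𝓝 0) := by
    rw [← ENNReal.ofReal_zero]
    exact ENNReal.tendsto_ofReal (tendsto_const_nhds.div_atTop (tendsto_pow_atTop two_ne_zero))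
  refine tendsto_of_tendsto_of_tendsto_of_le_of_le' tendsto_const_nhds bound_tendsto
    (Eventually.of_forall fun _ => zero_le) ?_
  filter_upwards [eventually_gt_atTop 0] with M hM
  refine iSup_le fun n => iSup₂_le fun hn β => ?_
  simpa only [one_mul] using
    Pmeas_le_mul_sqrt_mul_enorm2_mavg_sub_le (A n) (hX n hn) hα hs (hA n) (hT n) β 1 hM

lemma tendsto_iSup_Pmeas_mul_enorm2_mavg_sub
    (hX : ∀ n, k₁ + k₂ ≤ n → ((X n)ᵀ * X n).PosDef) (hα : 0 < α) (hs : 0 < s)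
    (hA : ∀ n, ((A n)ᵀ * A n).trace ≤ K) (hT : ∀ n : ℕ, n * ((X n)ᵀ * X n)⁻¹.trace ≤ T)
    {ε : ℝ} (hε : 0 < ε) {c : ℕ → ℝ} (hc : Tendsto (fun n : ℕ => c n / √n) atTop (𝓝 0)) :
    Tendsto (fun n : ℕ => ⨆ β : Fin k₁ ⊕ Fin k₂ → ℝ,
      Pmeas (X n) β s {Y | ε ≤ c n * enorm2 (A n *ᵥ mavg α s (X n) Y - A n *ᵥ β)})
      atTop (𝓝 0) := by
  have bound_tendsto :
      Tendsto (fun n : ℕ => ENNReal.ofReal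
        ((c n / √n) ^ 2 * (K * T * predictionRiskBound k₁ k₂ α s) / ε ^ 2)) atTop (𝓝 0) := by
    simpa only [zero_pow two_ne_zero, zero_mul, zero_div, ENNReal.ofReal_zero] using
      ENNReal.tendsto_ofReal (((hc.pow 2).mul_const _).div_const _)
  refine tendsto_of_tendsto_of_tendsto_of_le_of_le' tendsto_const_nhds bound_tendsto
    (Eventually.of_forall fun _ => zero_le) ?_
  filter_upwards [eventually_ge_atTop (k₁ + k₂), eventually_gt_atTop 0] with n hn hn_pos
  have sqrt_ne_zero : √(n : ℝ) ≠ 0 := (Real.sqrt_pos.2 (Nat.cast_pos.2 hn_pos)).ne'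
  refine iSup_le fun β => ?_
  simpa only [← mul_assoc, div_mul_cancel₀ _ sqrt_ne_zero] using
    Pmeas_le_mul_sqrt_mul_enorm2_mavg_sub_le (A n) (hX n hn) hα hs (hA n) (hT n) β (c n / √n) hε

theorem statement5_general
    (hX : ∀ n, k₁ + k₂ ≤ n → (X n).rank = k₁ + k₂)
    (hT : BddAbove (Set.range fun n : ℕ => n * ((X n)ᵀ * X n)⁻¹.trace))
    {σ : ℝ} (hσ : 0 < σ) (hα : 0 < α) (hA : ∃ c : ℝ, ∀ n, lamMax ((A n)ᵀ * A n) ≤ c) :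
    Tendsto (fun M : ℝ => ⨆ n, ⨆ (_ : k₁ + k₂ ≤ n), ⨆ β : Fin k₁ ⊕ Fin k₂ → ℝ,
      Pmeas (X n) β (σ ^ 2)
        {Y | M ≤ √n * enorm2 (A n *ᵥ mavg α (σ ^ 2) (X n) Y - A n *ᵥ β)}) atTop (𝓝 0) ∧
    ∀ ε : ℝ, 0 < ε → ∀ c : ℕ → ℝ, Tendsto (fun n : ℕ => c n / √n) atTop (𝓝 0) →
      Tendsto (fun n : ℕ => ⨆ β : Fin k₁ ⊕ Fin k₂ → ℝ,
        Pmeas (X n) β (σ ^ 2)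
          {Y | ε ≤ c n * enorm2 (A n *ᵥ mavg α (σ ^ 2) (X n) Y - A n *ᵥ β)}) atTop (𝓝 0) := by
  obtain ⟨T, hT⟩ := hT
  obtain ⟨c, hA⟩ := hA
  have gram_posDef (n : ℕ) (hn : k₁ + k₂ ≤ n) : ((X n)ᵀ * X n).PosDef :=
    posDef_gram_of_rank_eq_card (by simpa using hX n hn)
  have trace_A_le (n : ℕ) : ((A n)ᵀ * A n).trace ≤ Fintype.card (Fin k₁ ⊕ Fin k₂) * c :=
    (trace_le_card_mul_lamMax (posSemidef_transpose_mul_self (A n)).isHermitian).trans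
      (mul_le_mul_of_nonneg_left (hA n) (Nat.cast_nonneg _))
  have trace_X_le (n : ℕ) : n * ((X n)ᵀ * X n)⁻¹.trace ≤ T := hT (Set.mem_range_self n)
  have hs : 0 < σ ^ 2 := pow_pos hσ 2
  exact ⟨tendsto_iSup_Pmeas_sqrt_mul_enorm2_mavg_sub gram_posDef hα hs trace_A_le trace_X_le,
    fun ε hε c hc =>
      tendsto_iSup_Pmeas_mul_enorm2_mavg_sub gram_posDef hα hs trace_A_le trace_X_le hε hc⟩

end UniformConsistency

/-- uniform `√n`-consistency of `A_nβ̃` for `A_nβ` when the largest eigenvalues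
of `A_n'A_n` are bounded, and the resulting uniform `c_n`-consistency for `c_n = o(√n)`. -/
theorem statement5 {k₁ k₂ : ℕ} (hk₁ : 0 < k₁) (hk₂ : 0 < k₂)
    (X : ∀ n : ℕ, Matrix (Fin n) (Fin k₁ ⊕ Fin k₂) ℝ)
    (hX : ∀ n, k₁ + k₂ ≤ n → (X n).rank = k₁ + k₂)
    (Q : Matrix (Fin k₁ ⊕ Fin k₂) (Fin k₁ ⊕ Fin k₂) ℝ) (hQ : Q.PosDef)
    (hlim : Tendsto (fun n : ℕ => (n : ℝ)⁻¹ • ((X n)ᵀ * X n)) atTop (𝓝 Q))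
    (σ α : ℝ) (hσ : 0 < σ) (hα : 0 < α)
    (p : ℕ → ℕ) (A : ∀ n : ℕ, Matrix (Fin (p n)) (Fin k₁ ⊕ Fin k₂) ℝ)
    (hA : ∃ c : ℝ, ∀ n, lamMax ((A n)ᵀ * A n) ≤ c) :
    Tendsto (fun M : ℝ => ⨆ n, ⨆ (_ : k₁ + k₂ ≤ n), ⨆ β : (Fin k₁ ⊕ Fin k₂) → ℝ,
        Pmeas (X n) β (σ ^ 2)
          {Y | M ≤ Real.sqrt n *
            enorm2 ((A n).mulVec (mavg α (σ ^ 2) (X n) Y) - (A n).mulVec β)})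
      atTop (𝓝 (0 : ℝ≥0∞)) ∧
    ∀ ε : ℝ, 0 < ε → ∀ c : ℕ → ℝ, (∀ n, 0 ≤ c n) →
      Tendsto (fun n : ℕ => c n / Real.sqrt n) atTop (𝓝 (0 : ℝ)) →
      Tendsto (fun n : ℕ => ⨆ β : (Fin k₁ ⊕ Fin k₂) → ℝ,
          Pmeas (X n) β (σ ^ 2)
            {Y | ε ≤ c n *
              enorm2 ((A n).mulVec (mavg α (σ ^ 2) (X n) Y) - (A n).mulVec β)})
        atTop (𝓝 (0 : ℝ≥0∞)) := by
  have hT := (tendsto_nat_mul_trace_inv hQ.det_pos.ne' hlim).bddAbove_range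
  obtain ⟨sqrt_rate, slower_rate⟩ := statement5_general hX hT hσ hα hA
  exact ⟨sqrt_rate, fun ε hε c _ hc => slower_rate ε hε c hc⟩

end
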